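/- Assume Ω is a bounded C¹ domain, b is Lipschitz with b(0)=0, the origin is globally asymptotically stable for Ẋ = b(X), b·ν < 0 on ∂Ω, b(x)·x ≤ −b₀|x|² on B_{r₀}, and a^ε ∈ C(Q̄;𝕊ⁿ(θ₀)). Let Π be a relatively open subset of ∂Ω and fix δ ∈ (0, r₀). Then there exist T_δ > 0 and ε₀ ∈ (0,1), depending only on δ, θ₀, b, Π and Ω, such that: if, for ε ∈ (0,ε₀), u^ε ∈ C(Q̄) ∩ C^{2,1}(Q) is a classical solution of (L) satisfying, for some T(ε) ∈ (T_δ, ∞], u^ε ≤ 1 in Ω×[0,T(ε)) and u^ε ≤ 0 in (B_δ ∪ Π)×[0,T(ε)), then u^ε(x,t) ≤ δ for all (x,t) ∈ Ω^Π_δ × [T_δ, T(ε)). -/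

import Mathlib

open Set Filter Metric Topology
open scoped ENNReal

noncomputable section

/-- `n`-dimensional Euclidean space. -/
abbrev Eu (n : ℕ) := EuclideanSpace ℝ (Fin n)

variable {n : ℕ}

/-- Euclidean dot product. -/
def dotp (x y : Eu n) : ℝ := ∑ i, x i * y i

/-- The quadratic form `A p · p` of a matrix `A`. -/
def mquad (A : Matrix (Fin n) (Fin n) ℝ) (p : Eu n) : ℝ := ∑ i, ∑ j, A i j * p i * p j

/-- `A ∈ 𝕊ⁿ(θ)`: symmetric with `θ I ≤ A ≤ θ⁻¹ I`. -/
def memS (θ : ℝ) (A : Matrix (Fin n) (Fin n) ℝ) : Prop :=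
  A.IsSymm ∧ ∀ p : Eu n, θ * ‖p‖ ^ 2 ≤ mquad A p ∧ mquad A p ≤ θ⁻¹ * ‖p‖ ^ 2

/-- order of symmetric matrices (via quadratic forms). -/
def mle (A B : Matrix (Fin n) (Fin n) ℝ) : Prop := ∀ p : Eu n, mquad A p ≤ mquad B p

/-- trace of the product `A·H`. -/
def trMul (A H : Matrix (Fin n) (Fin n) ℝ) : ℝ := ∑ i, ∑ j, A i j * H j i

/-- the Pucci maximal operator associated with `𝕊ⁿ(θ)`. -/
def pucci (θ : ℝ) (X : Matrix (Fin n) (Fin n) ℝ) : ℝ :=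
  sSup ((fun A => trMul A X) '' {A | memS θ A})

/-- time derivative of `u(x,t)`. -/
def tD (u : Eu n → ℝ → ℝ) (x : Eu n) (t : ℝ) : ℝ := deriv (u x) t

/-- spatial gradient of `u(x,t)`. -/
def sG (u : Eu n → ℝ → ℝ) (x : Eu n) (t : ℝ) : Eu n := gradient (fun y => u y t) x

/-- spatial Hessian matrix of `u(x,t)`. -/
def sH (u : Eu n → ℝ → ℝ) (x : Eu n) (t : ℝ) : Matrix (Fin n) (Fin n) ℝ :=
  fun i j => fderiv ℝ (fun y => sG u y t i) x (EuclideanSpace.single j 1)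

/-- Hessian matrix of a static function. -/
def hessS (v : Eu n → ℝ) (x : Eu n) : Matrix (Fin n) (Fin n) ℝ :=
  fun i j => fderiv ℝ (fun y => gradient v y i) x (EuclideanSpace.single j 1)

/-- closed parabolic cylinder `Q̄_T = closure Ω × [0,T]` (with `T ∈ (0,∞]`). -/
def cylC (Ω : Set (Eu n)) (T : ℝ≥0∞) : Set (Eu n × ℝ) :=
  {p | p.1 ∈ closure Ω ∧ 0 ≤ p.2 ∧ ENNReal.ofReal p.2 ≤ T}

/-- open parabolic cylinder `Q_T = Ω × (0,T)`. -/
def cylO (Ω : Set (Eu n)) (T : ℝ≥0∞) : Set (Eu n × ℝ) :=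
  {p | p.1 ∈ Ω ∧ 0 < p.2 ∧ ENNReal.ofReal p.2 < T}

/-- `u ∈ C^{2,1}(Q_T)`. -/
def C21 (u : Eu n → ℝ → ℝ) (Ω : Set (Eu n)) (T : ℝ≥0∞) : Prop :=
  (∀ x ∈ Ω, ∀ t : ℝ, 0 < t → ENNReal.ofReal t < T →
     ContDiffAt ℝ 2 (fun y => u y t) x ∧ DifferentiableAt ℝ (u x) t) ∧
  ContinuousOn (fun p : Eu n × ℝ => tD u p.1 p.2) (cylO Ω T) ∧
  ContinuousOn (fun p : Eu n × ℝ => sH u p.1 p.2) (cylO Ω T)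

/-- `u ∈ C(Q̄_T) ∩ C^{2,1}(Q_T)`. -/
def Classical21 (u : Eu n → ℝ → ℝ) (Ω : Set (Eu n)) (T : ℝ≥0∞) : Prop :=
  ContinuousOn (fun p : Eu n × ℝ => u p.1 p.2) (cylC Ω T) ∧ C21 u Ω T

/-- a coefficient field in `C(Q̄_T; 𝕊ⁿ(θ))`. -/
def MatC (θ : ℝ) (A : Eu n → ℝ → Matrix (Fin n) (Fin n) ℝ) (Ω : Set (Eu n))
    (T : ℝ≥0∞) : Prop :=
  ContinuousOn (fun p : Eu n × ℝ => A p.1 p.2) (cylC Ω T) ∧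
  ∀ p ∈ cylC Ω T, memS θ (A p.1 p.2)

/-- `u` is a classical solution of `u_t = ε tr[A D²u] + b·Du` in `Q_T`. -/
def SolveL (ε : ℝ) (A : Eu n → ℝ → Matrix (Fin n) (Fin n) ℝ) (b : Eu n → Eu n)
    (u : Eu n → ℝ → ℝ) (Ω : Set (Eu n)) (T : ℝ≥0∞) : Prop :=
  ∀ x ∈ Ω, ∀ t : ℝ, 0 < t → ENNReal.ofReal t < T →
    tD u x t = ε * trMul (A x t) (sH u x t) + dotp (b x) (sG u x t)

/-- `u` is a classical subsolution of `(L)` in `Q_T`. -/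
def SubsolL (ε : ℝ) (A : Eu n → ℝ → Matrix (Fin n) (Fin n) ℝ) (b : Eu n → Eu n)
    (u : Eu n → ℝ → ℝ) (Ω : Set (Eu n)) (T : ℝ≥0∞) : Prop :=
  ∀ x ∈ Ω, ∀ t : ℝ, 0 < t → ENNReal.ofReal t < T →
    tD u x t ≤ ε * trMul (A x t) (sH u x t) + dotp (b x) (sG u x t)

/-- `u` is a classical supersolution of `(L)` in `Q_T`. -/
def SupersolL (ε : ℝ) (A : Eu n → ℝ → Matrix (Fin n) (Fin n) ℝ) (b : Eu n → Eu n)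
    (u : Eu n → ℝ → ℝ) (Ω : Set (Eu n)) (T : ℝ≥0∞) : Prop :=
  ∀ x ∈ Ω, ∀ t : ℝ, 0 < t → ENNReal.ofReal t < T →
    ε * trMul (A x t) (sH u x t) + dotp (b x) (sG u x t) ≤ tD u x t

/-- viscosity subsolution of `H(x,Du) = 0` on `A`. -/
def ViscSub (H : Eu n → Eu n → ℝ) (A : Set (Eu n)) (u : Eu n → ℝ) : Prop :=
  ∀ φ : Eu n → ℝ, ContDiff ℝ 1 φ → ∀ x ∈ A,
    IsLocalMaxOn (fun y => u y - φ y) A x → H x (gradient φ x) ≤ 0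

/-- viscosity supersolution of `H(x,Du) = 0` on `A`. -/
def ViscSup (H : Eu n → Eu n → ℝ) (A : Set (Eu n)) (u : Eu n → ℝ) : Prop :=
  ∀ φ : Eu n → ℝ, ContDiff ℝ 1 φ → ∀ x ∈ A,
    IsLocalMinOn (fun y => u y - φ y) A x → 0 ≤ H x (gradient φ x)

/-- the Hamiltonian `H_α(x,p) = α(x) p·p + b(x)·p`. -/
def Ham (α : Eu n → Matrix (Fin n) (Fin n) ℝ) (b : Eu n → Eu n) (x p : Eu n) : ℝ :=
  mquad (α x) p + dotp (b x) p

/-- the quasi-potential `V_α`: the pointwise supremum (= maximal element) of all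
Lipschitz viscosity subsolutions of `H_α(x,Du)=0` in `Ω` vanishing at the origin. -/
def Vq (α : Eu n → Matrix (Fin n) (Fin n) ℝ) (b : Eu n → Eu n) (Ω : Set (Eu n))
    (x : Eu n) : ℝ :=
  sSup {r | ∃ u : Eu n → ℝ, (∃ K : NNReal, LipschitzOnWith K u (closure Ω)) ∧
    u 0 = 0 ∧ ViscSub (Ham α b) Ω u ∧ r = u x}

/-- `M_α = min_{∂Ω} V_α`. -/
def Mq (α : Eu n → Matrix (Fin n) (Fin n) ℝ) (b : Eu n → Eu n) (Ω : Set (Eu n)) : ℝ :=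
  sInf (Vq α b Ω '' frontier Ω)

/-- `argmin (V_α | ∂Ω)`. -/
def argminV (α : Eu n → Matrix (Fin n) (Fin n) ℝ) (b : Eu n → Eu n)
    (Ω : Set (Eu n)) : Set (Eu n) :=
  {x ∈ frontier Ω | ∀ y ∈ frontier Ω, Vq α b Ω x ≤ Vq α b Ω y}

/-- `Σ_α^m = {x ∈ Ω̄ : V_α(x) ≤ m}`. -/
def SigmaM (α : Eu n → Matrix (Fin n) (Fin n) ℝ) (b : Eu n → Eu n) (Ω : Set (Eu n))
    (m : ℝ) : Set (Eu n) :=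
  {x ∈ closure Ω | Vq α b Ω x ≤ m}

/-- `Ω` is a bounded `C¹` domain with outward unit normal `ν`. -/
def IsBdC1With (Ω : Set (Eu n)) (ν : Eu n → Eu n) : Prop :=
  IsOpen Ω ∧ Bornology.IsBounded Ω ∧
  ∃ ρ : Eu n → ℝ, ContDiff ℝ 1 ρ ∧ Ω = {x | ρ x < 0} ∧
    ∀ x ∈ frontier Ω, gradient ρ x ≠ 0 ∧ ν x = ‖gradient ρ x‖⁻¹ • gradient ρ x

/-- `X` is the flow of `b`, and the origin is globally asymptotically stable. -/
def GAS (b : Eu n → Eu n) (X : ℝ → Eu n → Eu n) : Prop :=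
  (∀ x, X 0 x = x) ∧ (∀ x t, HasDerivAt (fun s => X s x) (b (X t x)) t) ∧
  (∀ x, Tendsto (fun t => X t x) atTop (nhds 0)) ∧
  (∀ ε > (0:ℝ), ∃ δ > (0:ℝ), ∀ x : Eu n, ‖x‖ < δ → ∀ t ≥ (0:ℝ), ‖X t x‖ < ε)

/-- `Ω_δ = {x ∈ Ω : dist(x,∂Ω) > δ}`. -/
def Omd (Ω : Set (Eu n)) (δ : ℝ) : Set (Eu n) := {x ∈ Ω | δ < infDist x (frontier Ω)}

/-- `Ω^Π_δ = {x ∈ Ω̄ : dist(x, ∂Ω \ Π) > δ}`. -/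
def OmPid (Ω Pset : Set (Eu n)) (δ : ℝ) : Set (Eu n) :=
  {x ∈ closure Ω | δ < infDist x (frontier Ω \ Pset)}

/-- the standing assumptions (B). -/
structure SettingB (n : ℕ) where
  Ω : Set (Eu n)
  ν : Eu n → Eu n
  g : Eu n → ℝ
  θ₀ : ℝ
  a : Eu n → ℝ → Matrix (Fin n) (Fin n) ℝ
  b : Eu n → Eu n
  b₀ : ℝ
  r₀ : ℝ
  θ₀_mem : θ₀ ∈ Set.Ioc (0 : ℝ) 1
  domain : IsBdC1With Ω ν
  zero_mem : (0 : Eu n) ∈ Ω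
  g_cont : ContinuousOn g (closure Ω)
  a_cont : ContinuousOn (fun p : Eu n × ℝ => a p.1 p.2) (closure Ω ×ˢ Set.univ)
  a_mem : ∀ x ∈ closure Ω, ∀ c : ℝ, memS θ₀ (a x c)
  b_lip : ∃ K : NNReal, LipschitzWith K b
  b_zero : b 0 = 0
  b_gas : ∃ X : ℝ → Eu n → Eu n, GAS b X
  b_inward : ∀ x ∈ frontier Ω, dotp (b x) (ν x) < 0
  b₀_pos : 0 < b₀
  r₀_pos : 0 < r₀
  ball_sub : closedBall (0 : Eu n) r₀ ⊆ Ω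
  b_coerc : ∀ x ∈ ball (0 : Eu n) r₀, dotp (b x) x ≤ -b₀ * ‖x‖ ^ 2

namespace SettingB

variable (S : SettingB n)

/-- the quasi-potential `V^c` associated with `(a(·,c), b)`. -/
def Vc (c : ℝ) : Eu n → ℝ := Vq (fun x => S.a x c) S.b S.Ω

/-- `M(c) = min_{∂Ω} V^c`. -/
def M (c : ℝ) : ℝ := sInf (S.Vc c '' frontier S.Ω)

/-- `G(c) = {g(x) : x ∈ argmin(V^c|∂Ω)}`. -/
def Gset (c : ℝ) : Set ℝ := S.g '' argminV (fun x => S.a x c) S.b S.Ω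

/-- `G⁺(c) = max G(c)`. -/
def Gp (c : ℝ) : ℝ := sSup (S.Gset c)

/-- `G⁻(c) = min G(c)`. -/
def Gm (c : ℝ) : ℝ := sInf (S.Gset c)

/-- `c₀ = g(0)`. -/
def c0 : ℝ := S.g 0

/-- `g_min = min_{Ω̄} g`. -/
def gmin : ℝ := sInf (S.g '' closure S.Ω)

/-- `g_max = max_{Ω̄} g`. -/
def gmax : ℝ := sSup (S.g '' closure S.Ω)

/-- the crossing value `c₁`. -/
def c1 : ℝ :=
  if S.c0 ≤ S.Gp S.c0 then sInf {c | S.c0 ≤ c ∧ S.Gm c ≤ c}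
  else sSup {c | c ≤ S.c0 ∧ c ≤ S.Gp c}

/-- the function `c̄ : (0,∞) → I_g`. -/
def cbar (l : ℝ) : ℝ :=
  if l < S.M S.c0 ∨ S.c1 = S.c0 then S.c0
  else if S.c0 < S.c1 then min S.c1 (sInf {c | c ∈ Set.Icc S.c0 S.c1 ∧ S.M c = l})
  else max S.c1 (sSup {c | c ∈ Set.Icc S.c1 S.c0 ∧ S.M c = l})

/-- assumption (FK13): `G⁺(c₀) = G⁻(c₀)`. -/
def FK13 : Prop := S.Gp S.c0 = S.Gm S.c0

/-- assumption (FK12). -/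
def FK12 : Prop :=
  ∀ δ₀ > (0:ℝ), ∃ δ ∈ Set.Ioc (0:ℝ) δ₀,
    (S.c1 ≤ S.c0 ∧ S.gmin < S.c1 → S.c1 - δ < S.Gm (S.c1 - δ)) ∧
    (S.c0 ≤ S.c1 ∧ S.c1 < S.gmax → S.Gp (S.c1 + δ) < S.c1 + δ)

/-- `u` is a classical (`C(Q̄) ∩ C^{2,1}(Q)`) solution of the quasi-linear equation (QL). -/
def SolvesQL (ε : ℝ) (u : Eu n → ℝ → ℝ) : Prop :=
  Classical21 u S.Ω ⊤ ∧ SolveL ε (fun x t => S.a x (u x t)) S.b u S.Ω ⊤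

/-- the boundary condition (BC): `u = g` on the parabolic boundary of `Q`. -/
def BC (u : Eu n → ℝ → ℝ) : Prop :=
  (∀ x ∈ closure S.Ω, u x 0 = S.g x) ∧ ∀ x ∈ frontier S.Ω, ∀ t > (0:ℝ), u x t = S.g x

end SettingB

/-!
Fix `(x, t)` with `x ∈ Ω^Π_δ` and run the trajectory of `b` from `x` backward in time:
`y(s) = X(t - s, x)` solves `y' = -b(y)`. A paraboloid `M e^{2K(s - t₁)} |z - y(s)|² + κ (s - t₁)`
with vertex on this curve is a supersolution of (L) as soon as `κ` is a suitable multiple of `ε`.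
Since `b` points into `Ω`, the trajectory keeps a positive distance from `∂Ω \ Π`, and after a time
`τ` bounded uniformly in `x` it is deep inside `B_δ`. So, with `M` large and `t₁ = t - τ`, the
paraboloid dominates `u` on the parabolic boundary of `Ω × (t - τ, t)`: at each boundary point
either `u ≤ 0`, or the point is far from the vertex. At `(x, t)` comparison gives `u ≤ κ τ = O(ε)`.
-/

section SecondOrder

theorem deriv_deriv_nonpos_of_isLocalMax {g : ℝ → ℝ} {a : ℝ} (hg : ContinuousAt g a)
    (hmax : IsLocalMax g a) : deriv (deriv g) a ≤ 0 := by
  by_contra! hpos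
  have hmin : IsLocalMin g a := isLocalMin_of_deriv_deriv_pos hpos hmax.deriv_eq_zero hg
  have hconst : g =ᶠ[𝓝 a] fun _ => g a := by
    filter_upwards [hmax, hmin] with s hle hge using le_antisymm hle hge
  have hzero : deriv (deriv g) a = 0 := by simpa using hconst.deriv.deriv_eq
  exact hpos.ne' hzero

variable {E : Type*} [NormedAddCommGroup E] [NormedSpace ℝ E] {f : E → ℝ} {x : E}

theorem deriv_deriv_line_eq_fderiv_fderiv (hf : ContDiffAt ℝ 2 f x) (p : E) :
    deriv (deriv fun s : ℝ => f (x + s • p)) 0 = fderiv ℝ (fderiv ℝ f) x p p := by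
  have hline (s : ℝ) : HasDerivAt (fun s : ℝ => x + s • p) p s := by
    simpa using ((hasDerivAt_id s).smul_const p).const_add x
  have hline_zero : Tendsto (fun s : ℝ => x + s • p) (𝓝 0) (𝓝 x) := by
    simpa using (hline 0).continuousAt.tendsto
  have hdiff : ∀ᶠ y in 𝓝 x, DifferentiableAt ℝ f y :=
    (hf.eventually (by simp)).mono fun y hy => hy.differentiableAt (by norm_num)
  have hfirst : deriv (fun s : ℝ => f (x + s • p)) =ᶠ[𝓝 0]
      fun s => fderiv ℝ f (x + s • p) p := by
    filter_upwards [hline_zero.eventually hdiff] with s hs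
    exact (hs.hasFDerivAt.comp_hasDerivAt s (hline s)).deriv
  have hsecond : HasFDerivAt (fderiv ℝ f) (fderiv ℝ (fderiv ℝ f) x) (x + (0 : ℝ) • p) := by
    simpa using ((hf.fderiv_right (m := 1) (by norm_num)).differentiableAt one_ne_zero).hasFDerivAt
  have hsecond_line : HasDerivAt (fun s : ℝ => fderiv ℝ f (x + s • p))
      (fderiv ℝ (fderiv ℝ f) x p) 0 := hsecond.comp_hasDerivAt 0 (hline 0)
  rw [hfirst.deriv_eq]
  exact ((ContinuousLinearMap.apply ℝ ℝ p).hasFDerivAt.comp_hasDerivAt 0 hsecond_line).deriv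

theorem fderiv_fderiv_apply_nonpos_of_isLocalMax (hf : ContDiffAt ℝ 2 f x)
    (hmax : IsLocalMax f x) (p : E) : fderiv ℝ (fderiv ℝ f) x p p ≤ 0 := by
  have hline : ContinuousAt (fun s : ℝ => x + s • p) 0 := by fun_prop
  have hline_zero : Tendsto (fun s : ℝ => x + s • p) (𝓝 0) (𝓝 x) := by
    simpa using hline.tendsto
  have hmax_line : IsLocalMax (fun s : ℝ => f (x + s • p)) 0 := by
    filter_upwards [hline_zero.eventually hmax] with s hs
    simpa using hs
  rw [← deriv_deriv_line_eq_fderiv_fderiv hf]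
  refine deriv_deriv_nonpos_of_isLocalMax ?_ hmax_line
  exact ContinuousAt.comp_of_eq hf.continuousAt hline (by simp)

theorem hasDerivAt_nonneg_of_isMaxOn_Icc {g : ℝ → ℝ} {g' a t : ℝ} (hat : a < t)
    (hg : HasDerivAt g g' t) (hmax : IsMaxOn g (Icc a t) t) : 0 ≤ g' := by
  have hcone : a - t ∈ posTangentConeAt (Icc a t) t :=
    sub_mem_posTangentConeAt_of_segment_subset (by rw [segment_symm, segment_eq_Icc hat.le])
  have hle : (a - t) * g' ≤ 0 := by
    simpa using hmax.localize.hasFDerivWithinAt_nonpos hg.hasFDerivAt.hasFDerivWithinAt hcone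
  exact nonneg_of_mul_nonpos_right hle (sub_neg.2 hat)

end SecondOrder

section Hessian

theorem dotp_eq_inner (x y : Eu n) : dotp x y = inner ℝ x y := by
  simp [dotp, PiLp.inner_apply, mul_comm]

theorem gradient_apply_eq_fderiv_single (f : Eu n → ℝ) (x : Eu n) (i : Fin n) :
    gradient f x i = fderiv ℝ f x (EuclideanSpace.single i 1) := by
  rw [← inner_gradient_left, EuclideanSpace.inner_single_right]
  simp

variable {f g : Eu n → ℝ} {x : Eu n}

theorem hessS_apply (hf : ContDiffAt ℝ 2 f x) (i j : Fin n) :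
    hessS f x i j =
      fderiv ℝ (fderiv ℝ f) x (EuclideanSpace.single j 1) (EuclideanSpace.single i 1) := by
  have hdiff : DifferentiableAt ℝ (fderiv ℝ f) x :=
    (hf.fderiv_right (m := 1) (by norm_num)).differentiableAt one_ne_zero
  simp only [hessS, gradient_apply_eq_fderiv_single]
  rw [fderiv_clm_apply hdiff (differentiableAt_const _)]
  simp

theorem mquad_hessS (hf : ContDiffAt ℝ 2 f x) (p : Eu n) :
    mquad (hessS f x) p = fderiv ℝ (fderiv ℝ f) x p p := by
  have hp : p = ∑ i, p i • EuclideanSpace.single i (1 : ℝ) := by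
    simpa using ((EuclideanSpace.basisFun (Fin n) ℝ).sum_repr p).symm
  conv_rhs => rw [hp]
  simp only [mquad, hessS_apply hf, map_sum, map_smul, sum_apply,
    smul_apply, smul_eq_mul, Finset.mul_sum]
  exact Finset.sum_congr rfl fun i _ => Finset.sum_congr rfl fun j _ => by ring

theorem mquad_hessS_nonpos_of_isLocalMax (hf : ContDiffAt ℝ 2 f x) (hmax : IsLocalMax f x)
    (p : Eu n) : mquad (hessS f x) p ≤ 0 :=
  mquad_hessS hf p ▸ fderiv_fderiv_apply_nonpos_of_isLocalMax hf hmax p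

theorem gradient_eq_zero_of_isLocalMax (hmax : IsLocalMax f x) : gradient f x = 0 := by
  simp [gradient, hmax.fderiv_eq_zero]

theorem gradient_fun_sub (hf : DifferentiableAt ℝ f x) (hg : DifferentiableAt ℝ g x) :
    gradient (fun y => f y - g y) x = gradient f x - gradient g x := by
  simp [gradient, fderiv_fun_sub hf hg]

theorem hessS_fun_sub (hf : ContDiffAt ℝ 2 f x) (hg : ContDiffAt ℝ 2 g x) :
    hessS (fun y => f y - g y) x = hessS f x - hessS g x := by
  have hfderiv : fderiv ℝ (fun y => f y - g y) =ᶠ[𝓝 x] fun y => fderiv ℝ f y - fderiv ℝ g y := by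
    filter_upwards [hf.eventually (by simp), hg.eventually (by simp)] with y hfy hgy
    exact fderiv_fun_sub (hfy.differentiableAt two_ne_zero) (hgy.differentiableAt two_ne_zero)
  have hf' := (hf.fderiv_right (m := 1) (by norm_num)).differentiableAt one_ne_zero
  have hg' := (hg.fderiv_right (m := 1) (by norm_num)).differentiableAt one_ne_zero
  ext i j
  rw [Matrix.sub_apply, hessS_apply hf, hessS_apply hg, hessS_apply (hf.sub hg),
    hfderiv.fderiv_eq, fderiv_fun_sub hf' hg']
  rfl

theorem gradient_const_mul_norm_sub_sq_add (c k : ℝ) (x z : Eu n) :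
    gradient (fun y => c * ‖y - z‖ ^ 2 + k) x = (2 * c) • (x - z) := by
  have hnorm : HasFDerivAt (fun y : Eu n => c * ‖y - z‖ ^ 2 + k) _ x :=
    ((((hasFDerivAt_id x).sub_const z).norm_sq).const_mul c).add_const k
  refine ext_inner_right ℝ fun p => ?_
  rw [inner_gradient_left, hnorm.fderiv]
  simp only [id_eq, map_sub, ContinuousLinearMap.comp_id, smul_apply, sub_apply,
    coe_innerSL_apply, nsmul_eq_mul, Nat.cast_ofNat, smul_eq_mul, inner_smul_left,
    Real.ringHom_apply, inner_sub_left]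
  ring

theorem hessS_const_mul_norm_sub_sq_add (c k : ℝ) (x z : Eu n) :
    hessS (fun y => c * ‖y - z‖ ^ 2 + k) x = (2 * c) • (1 : Matrix (Fin n) (Fin n) ℝ) := by
  ext i j
  have hcoord : HasFDerivAt (fun y : Eu n => 2 * c * (y i - z i)) _ x :=
    (((EuclideanSpace.proj (𝕜 := ℝ) i).hasFDerivAt (x := x)).sub_const (z i)).const_mul (2 * c)
  simp only [hessS, gradient_const_mul_norm_sub_sq_add, PiLp.smul_apply, PiLp.sub_apply,
    smul_eq_mul]
  rw [hcoord.fderiv]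
  simp [Matrix.one_apply]

end Hessian

section Trace

variable {A H : Matrix (Fin n) (Fin n) ℝ}

theorem trMul_eq_trace (A H : Matrix (Fin n) (Fin n) ℝ) : trMul A H = (A * H).trace := by
  simp [trMul, Matrix.trace, Matrix.mul_apply]

theorem mquad_toLp (A : Matrix (Fin n) (Fin n) ℝ) (v : Fin n → ℝ) :
    mquad A (WithLp.toLp 2 v) = v ⬝ᵥ A.mulVec v := by
  simp only [mquad, dotProduct, Matrix.mulVec, Finset.mul_sum]
  exact Finset.sum_congr rfl fun i _ => Finset.sum_congr rfl fun j _ => by ring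

theorem trMul_nonpos (hA : A.PosSemidef) (hH : ∀ p : Eu n, mquad H p ≤ 0) : trMul A H ≤ 0 := by
  obtain ⟨m, v, rfl⟩ := Matrix.posSemidef_iff_eq_sum_vecMulVec.mp hA
  have htrace (k : Fin m) :
      (Matrix.vecMulVec (v k) (star (v k)) * H).trace = mquad H (WithLp.toLp 2 (v k)) := by
    rw [Matrix.vecMulVec_mul, Matrix.trace_vecMulVec, mquad_toLp, dotProduct_comm,
      star_trivial, Matrix.dotProduct_mulVec]
  rw [trMul_eq_trace, Matrix.sum_mul, Matrix.trace_sum]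
  exact Finset.sum_nonpos fun k _ => (htrace k).trans_le (hH _)

theorem memS.posSemidef {θ : ℝ} (hθ : 0 ≤ θ) (hA : memS θ A) : A.PosSemidef := by
  refine Matrix.posSemidef_iff_dotProduct_mulVec.2 ⟨?_, fun v => ?_⟩
  · rw [Matrix.IsHermitian, Matrix.conjTranspose_eq_transpose_of_trivial]
    exact hA.1
  · rw [star_trivial, ← mquad_toLp]
    exact le_trans (by positivity) (hA.2 (WithLp.toLp 2 v)).1

theorem memS.trace_le {θ : ℝ} (hA : memS θ A) : A.trace ≤ n * θ⁻¹ := by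
  have hdiag (i : Fin n) : A i i ≤ θ⁻¹ := by
    simpa [mquad, Pi.single_apply] using (hA.2 (EuclideanSpace.single i 1)).2
  calc A.trace ≤ ∑ _i : Fin n, θ⁻¹ := Finset.sum_le_sum fun i _ => hdiag i
    _ = n * θ⁻¹ := by simp

end Trace

section MaximumPrinciple

/-- The right-hand side `ε tr[A D²u] + b·Du` of equation (L) at the point `(x, t)`. -/
def rhsL (ε : ℝ) (A : Eu n → ℝ → Matrix (Fin n) (Fin n) ℝ) (b : Eu n → Eu n)
    (u : Eu n → ℝ → ℝ) (x : Eu n) (t : ℝ) : ℝ :=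
  ε * trMul (A x t) (sH u x t) + dotp (b x) (sG u x t)

/-- The regularity that makes both sides of (L) meaningful at `(x, t)`: `C²` in space and
differentiable in time. No continuity of the derivatives in `(x, t)` jointly is asked for. -/
def RegularAt (u : Eu n → ℝ → ℝ) (x : Eu n) (t : ℝ) : Prop :=
  ContDiffAt ℝ 2 (fun y => u y t) x ∧ DifferentiableAt ℝ (u x) t

/-- `u` is a classical subsolution of (L) in `Ω × (t₁, t₀]`, continuous up to the parabolic
boundary. The final time is included, so that a maximum attained there can be tested. -/
structure IsSubsolOn (ε : ℝ) (A : Eu n → ℝ → Matrix (Fin n) (Fin n) ℝ) (b : Eu n → Eu n)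
    (Ω : Set (Eu n)) (t₁ t₀ : ℝ) (u : Eu n → ℝ → ℝ) : Prop where
  continuousOn : ContinuousOn (fun p : Eu n × ℝ => u p.1 p.2) (closure Ω ×ˢ Icc t₁ t₀)
  regularAt : ∀ x ∈ Ω, ∀ t ∈ Ioc t₁ t₀, RegularAt u x t
  tD_le : ∀ x ∈ Ω, ∀ t ∈ Ioc t₁ t₀, tD u x t ≤ rhsL ε A b u x t

variable {ε t₁ t₀ t : ℝ} {A : Eu n → ℝ → Matrix (Fin n) (Fin n) ℝ} {b : Eu n → Eu n}
  {Ω : Set (Eu n)} {u v w : Eu n → ℝ → ℝ} {x : Eu n}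

theorem SubsolL.isSubsolOn {T : ℝ≥0∞} (hu : SubsolL ε A b u Ω T)
    (hcont : ContinuousOn (fun p : Eu n × ℝ => u p.1 p.2) (cylC Ω T))
    (hreg : ∀ x ∈ Ω, ∀ t : ℝ, 0 < t → ENNReal.ofReal t < T → RegularAt u x t)
    (ht₁ : 0 ≤ t₁) (ht₀ : ENNReal.ofReal t₀ < T) : IsSubsolOn ε A b Ω t₁ t₀ u := by
  have hT {s : ℝ} (hs : s ≤ t₀) : ENNReal.ofReal s < T :=
    (ENNReal.ofReal_le_ofReal hs).trans_lt ht₀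
  refine ⟨hcont.mono ?_, fun x hx t ht => ?_, fun x hx t ht => ?_⟩
  · exact fun p hp => ⟨hp.1, ht₁.trans hp.2.1, (hT hp.2.2).le⟩
  · exact hreg x hx t (ht₁.trans_lt ht.1) (hT ht.2)
  · exact hu x hx t (ht₁.trans_lt ht.1) (hT ht.2)

theorem rhsL_nonpos_of_isLocalMax (hε : 0 ≤ ε) (hA : (A x t).PosSemidef)
    (hv : ContDiffAt ℝ 2 (fun y => v y t) x) (hmax : IsLocalMax (fun y => v y t) x) :
    rhsL ε A b v x t ≤ 0 := by
  have hgrad : sG v x t = 0 := gradient_eq_zero_of_isLocalMax hmax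
  have htrace : trMul (A x t) (sH v x t) ≤ 0 :=
    trMul_nonpos hA (mquad_hessS_nonpos_of_isLocalMax hv hmax)
  simpa [rhsL, hgrad, dotp_eq_inner] using mul_nonpos_of_nonneg_of_nonpos hε htrace

theorem rhsL_sub (hu : ContDiffAt ℝ 2 (fun y => u y t) x)
    (hw : ContDiffAt ℝ 2 (fun y => w y t) x) :
    rhsL ε A b (fun y s => u y s - w y s) x t = rhsL ε A b u x t - rhsL ε A b w x t := by
  have hgrad : sG (fun y s => u y s - w y s) x t = sG u x t - sG w x t :=
    gradient_fun_sub (hu.differentiableAt two_ne_zero) (hw.differentiableAt two_ne_zero)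
  have hhess : sH (fun y s => u y s - w y s) x t = sH u x t - sH w x t := hessS_fun_sub hu hw
  simp only [rhsL, hgrad, hhess, dotp_eq_inner, inner_sub_right, trMul_eq_trace, Matrix.mul_sub,
    Matrix.trace_sub]
  ring

theorem rhsL_sub_time (φ : ℝ → ℝ) :
    rhsL ε A b (fun y s => v y s - φ s) x t = rhsL ε A b v x t := by
  have hgrad (y : Eu n) : sG (fun y s => v y s - φ s) y t = sG v y t := by
    simp only [sG, gradient, fderiv_sub_const]
  have hhess : sH (fun y s => v y s - φ s) x t = sH v x t := by
    ext i j
    simp only [sH, hgrad]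
  rw [rhsL, hgrad, hhess, rhsL]

theorem nonpos_of_tD_lt_rhsL (hε : 0 ≤ ε) (hΩo : IsOpen Ω) (hΩb : Bornology.IsBounded Ω)
    (hA : ∀ x ∈ Ω, ∀ t ∈ Ioc t₁ t₀, (A x t).PosSemidef)
    (hv : IsSubsolOn ε A b Ω t₁ t₀ v)
    (hlt : ∀ x ∈ Ω, ∀ t ∈ Ioc t₁ t₀, tD v x t < rhsL ε A b v x t)
    (hini : ∀ x ∈ closure Ω, v x t₁ ≤ 0)
    (hbd : ∀ x ∈ frontier Ω, ∀ t ∈ Icc t₁ t₀, v x t ≤ 0) :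
    ∀ x ∈ closure Ω, ∀ t ∈ Icc t₁ t₀, v x t ≤ 0 := by
  intro x' hx' t' ht'
  obtain ⟨⟨x, t⟩, ⟨hx, ht⟩, hmax⟩ := (hΩb.isCompact_closure.prod isCompact_Icc).exists_isMaxOn
    ⟨(x', t'), hx', ht'⟩ hv.continuousOn
  have hmax_le {z : Eu n} {s : ℝ} (hz : z ∈ closure Ω) (hs : s ∈ Icc t₁ t₀) : v z s ≤ v x t :=
    hmax (⟨hz, hs⟩ : (z, s) ∈ closure Ω ×ˢ Icc t₁ t₀)
  refine (hmax_le hx' ht').trans ?_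
  by_contra! hpos
  have hxΩ : x ∈ Ω := by
    by_contra hx_not
    exact hpos.not_ge (hbd x (hΩo.frontier_eq ▸ ⟨hx, hx_not⟩) t ht)
  have ht_lt : t₁ < t := lt_of_le_of_ne ht.1 fun h => hpos.not_ge (h ▸ hini x hx)
  have ht_mem : t ∈ Ioc t₁ t₀ := ⟨ht_lt, ht.2⟩
  obtain ⟨hspace, htime⟩ := hv.regularAt x hxΩ t ht_mem
  have hspace_max : IsLocalMax (fun y => v y t) x := by
    filter_upwards [hΩo.mem_nhds hxΩ] with z hz using hmax_le (subset_closure hz) ht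
  have htime_max : IsMaxOn (v x) (Icc t₁ t) t :=
    fun s hs => hmax_le hx ⟨hs.1, hs.2.trans ht.2⟩
  have htD : 0 ≤ tD v x t := hasDerivAt_nonneg_of_isMaxOn_Icc ht_lt htime.hasDerivAt htime_max
  have hrhs : rhsL ε A b v x t ≤ 0 :=
    rhsL_nonpos_of_isLocalMax hε (hA x hxΩ t ht_mem) hspace hspace_max
  linarith [hlt x hxΩ t ht_mem]

theorem IsSubsolOn.nonpos (hv : IsSubsolOn ε A b Ω t₁ t₀ v) (hε : 0 ≤ ε) (hΩo : IsOpen Ω)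
    (hΩb : Bornology.IsBounded Ω) (hA : ∀ x ∈ Ω, ∀ t ∈ Ioc t₁ t₀, (A x t).PosSemidef)
    (hini : ∀ x ∈ closure Ω, v x t₁ ≤ 0)
    (hbd : ∀ x ∈ frontier Ω, ∀ t ∈ Icc t₁ t₀, v x t ≤ 0) :
    ∀ x ∈ closure Ω, ∀ t ∈ Icc t₁ t₀, v x t ≤ 0 := by
  intro x hx t ht
  have hpenalty (η : ℝ) (hη : 0 < η) : v x t ≤ η * (t - t₁) := by
    have htD_lt : ∀ x ∈ Ω, ∀ t ∈ Ioc t₁ t₀, tD (fun y s => v y s - η * (s - t₁)) x t <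
        rhsL ε A b (fun y s => v y s - η * (s - t₁)) x t := by
      intro x hx t ht
      have htD : tD (fun y s => v y s - η * (s - t₁)) x t = tD v x t - η := by
        have hlin : HasDerivAt (fun s => η * (s - t₁)) η t := by
          simpa using ((hasDerivAt_id t).sub_const t₁).const_mul η
        exact ((hv.regularAt x hx t ht).2.hasDerivAt.sub hlin).deriv
      rw [htD, rhsL_sub_time fun s => η * (s - t₁)]
      linarith [hv.tD_le x hx t ht]
    have hsub : IsSubsolOn ε A b Ω t₁ t₀ fun y s => v y s - η * (s - t₁) :=
      { continuousOn := hv.continuousOn.sub (by fun_prop)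
        regularAt := fun x hx t ht => ⟨(hv.regularAt x hx t ht).1.sub contDiffAt_const,
          (hv.regularAt x hx t ht).2.sub (by fun_prop)⟩
        tD_le := fun x hx t ht => (htD_lt x hx t ht).le }
    refine sub_nonpos.1 <| nonpos_of_tD_lt_rhsL hε hΩo hΩb hA hsub htD_lt
      (fun z hz => by simpa using hini z hz) (fun z hz s hs => ?_) x hx t ht
    linarith [hbd z hz s hs, mul_nonneg hη.le (sub_nonneg.2 hs.1)]
  have hlim : Tendsto (fun η : ℝ => η * (t - t₁)) (𝓝[>] 0) (𝓝 0) := by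
    have hcont : ContinuousAt (fun η : ℝ => η * (t - t₁)) 0 := by fun_prop
    simpa using hcont.tendsto.mono_left nhdsWithin_le_nhds
  exact ge_of_tendsto hlim (eventually_nhdsWithin_of_forall hpenalty)

theorem IsSubsolOn.le_of_supersol (hu : IsSubsolOn ε A b Ω t₁ t₀ u) (hε : 0 ≤ ε)
    (hΩo : IsOpen Ω) (hΩb : Bornology.IsBounded Ω)
    (hA : ∀ x ∈ Ω, ∀ t ∈ Ioc t₁ t₀, (A x t).PosSemidef)
    (hwc : ContinuousOn (fun p : Eu n × ℝ => w p.1 p.2) (closure Ω ×ˢ Icc t₁ t₀))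
    (hwr : ∀ x ∈ Ω, ∀ t ∈ Ioc t₁ t₀, RegularAt w x t)
    (hw : ∀ x ∈ Ω, ∀ t ∈ Ioc t₁ t₀, rhsL ε A b w x t ≤ tD w x t)
    (hini : ∀ x ∈ closure Ω, u x t₁ ≤ w x t₁)
    (hbd : ∀ x ∈ frontier Ω, ∀ t ∈ Icc t₁ t₀, u x t ≤ w x t) :
    ∀ x ∈ closure Ω, ∀ t ∈ Icc t₁ t₀, u x t ≤ w x t := by
  have hsub : IsSubsolOn ε A b Ω t₁ t₀ fun y s => u y s - w y s :=
    { continuousOn := hu.continuousOn.sub hwc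
      regularAt := fun x hx t ht => ⟨(hu.regularAt x hx t ht).1.sub (hwr x hx t ht).1,
        (hu.regularAt x hx t ht).2.sub (hwr x hx t ht).2⟩
      tD_le := fun x hx t ht => by
        obtain ⟨huspace, hutime⟩ := hu.regularAt x hx t ht
        obtain ⟨hwspace, hwtime⟩ := hwr x hx t ht
        have htD : tD (fun y s => u y s - w y s) x t = tD u x t - tD w x t :=
          deriv_fun_sub hutime hwtime
        rw [rhsL_sub huspace hwspace, htD]
        exact sub_le_sub (hu.tD_le x hx t ht) (hw x hx t ht) }
  intro x hx t ht
  exact sub_nonpos.1 <| hsub.nonpos hε hΩo hΩb hA (fun z hz => sub_nonpos.2 (hini z hz))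
    (fun z hz s hs => sub_nonpos.2 (hbd z hz s hs)) x hx t ht

end MaximumPrinciple

section Barrier

/-- The barrier `M e^{2K(t - t₁)} |x - y(t)|² + κ (t - t₁)`, a paraboloid whose vertex follows
the curve `y`. It is a supersolution of (L) when `y' = -b(y)`: the growth rate `2K` makes up for
the drift, which has one-sided Lipschitz constant `K`, and `κ` for the diffusion. -/
def movingParaboloid (M K κ t₁ : ℝ) (y : ℝ → Eu n) (x : Eu n) (t : ℝ) : ℝ :=
  M * Real.exp (2 * K * (t - t₁)) * ‖x - y t‖ ^ 2 + κ * (t - t₁)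

variable {ε Λ M K κ t₁ t₀ t r : ℝ} {A : Eu n → ℝ → Matrix (Fin n) (Fin n) ℝ} {b : Eu n → Eu n}
  {Ω : Set (Eu n)} {u : Eu n → ℝ → ℝ} {x : Eu n} {y : ℝ → Eu n}

theorem hasDerivAt_movingParaboloid {y' : Eu n} (hy : HasDerivAt y y' t) :
    HasDerivAt (movingParaboloid M K κ t₁ y x)
      (2 * (M * Real.exp (2 * K * (t - t₁))) * (K * ‖x - y t‖ ^ 2 - inner ℝ (x - y t) y') + κ)
      t := by
  have hlin (c : ℝ) : HasDerivAt (fun s => c * (s - t₁)) c t := by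
    simpa using ((hasDerivAt_id t).sub_const t₁).const_mul c
  have hamp : HasDerivAt (fun s => M * Real.exp (2 * K * (s - t₁)))
      (M * (Real.exp (2 * K * (t - t₁)) * (2 * K))) t := (hlin (2 * K)).exp.const_mul M
  have hsq : HasDerivAt (fun s => ‖x - y s‖ ^ 2) (2 * inner ℝ (x - y t) (-y')) t :=
    (hy.const_sub x).norm_sq
  refine ((hamp.mul hsq).add (hlin κ)).congr_deriv ?_
  rw [inner_neg_right]
  ring

theorem regularAt_movingParaboloid (hy : DifferentiableAt ℝ y t) :
    RegularAt (movingParaboloid M K κ t₁ y) x t := by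
  refine ⟨ContDiff.contDiffAt ?_, (hasDerivAt_movingParaboloid hy.hasDerivAt).differentiableAt⟩
  exact (contDiff_const.mul ((contDiff_id.sub contDiff_const).norm_sq ℝ)).add contDiff_const

theorem rhsL_movingParaboloid :
    rhsL ε A b (movingParaboloid M K κ t₁ y) x t =
      2 * (M * Real.exp (2 * K * (t - t₁))) *
        (ε * (A x t).trace + inner ℝ (b x) (x - y t)) := by
  have hgrad : sG (movingParaboloid M K κ t₁ y) x t = _ :=
    gradient_const_mul_norm_sub_sq_add (M * Real.exp (2 * K * (t - t₁))) (κ * (t - t₁)) x (y t)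
  have hhess : sH (movingParaboloid M K κ t₁ y) x t = _ :=
    hessS_const_mul_norm_sub_sq_add (M * Real.exp (2 * K * (t - t₁))) (κ * (t - t₁)) x (y t)
  rw [rhsL, hgrad, hhess, dotp_eq_inner, inner_smul_right, trMul_eq_trace, Matrix.mul_smul,
    Matrix.mul_one, Matrix.trace_smul, smul_eq_mul]
  ring

theorem rhsL_movingParaboloid_le_tD (hε : 0 ≤ ε) (hM : 0 ≤ M) (hA : (A x t).trace ≤ Λ)
    (hκ : 2 * (M * Real.exp (2 * K * (t - t₁))) * (ε * Λ) ≤ κ)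
    (hb : inner ℝ (b x - b (y t)) (x - y t) ≤ K * ‖x - y t‖ ^ 2)
    (hy : HasDerivAt y (-b (y t)) t) :
    rhsL ε A b (movingParaboloid M K κ t₁ y) x t ≤ tD (movingParaboloid M K κ t₁ y) x t := by
  rw [rhsL_movingParaboloid, tD, (hasDerivAt_movingParaboloid hy).deriv, inner_neg_right,
    real_inner_comm]
  rw [inner_sub_left] at hb
  set m := M * Real.exp (2 * K * (t - t₁))
  have hm : 0 ≤ 2 * m := by positivity
  calc 2 * m * (ε * (A x t).trace + inner ℝ (x - y t) (b x))
      ≤ 2 * m * (ε * Λ + (K * ‖x - y t‖ ^ 2 + inner ℝ (b (y t)) (x - y t))) := by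
        refine mul_le_mul_of_nonneg_left (add_le_add (mul_le_mul_of_nonneg_left hA hε) ?_) hm
        rw [real_inner_comm]
        linarith
    _ ≤ 2 * m * (K * ‖x - y t‖ ^ 2 - -inner ℝ (x - y t) (b (y t))) + κ := by
        rw [real_inner_comm]
        linarith

theorem IsSubsolOn.le_along_trajectory (hu : IsSubsolOn ε A b Ω t₁ t₀ u) (hε : 0 ≤ ε)
    (hΩo : IsOpen Ω) (hΩb : Bornology.IsBounded Ω) (hK : 0 ≤ K) (hΛ : 0 ≤ Λ) (ht : t₁ ≤ t₀)
    (hA : ∀ x ∈ Ω, ∀ t ∈ Ioc t₁ t₀, (A x t).PosSemidef ∧ (A x t).trace ≤ Λ)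
    (hb : ∀ x z, inner ℝ (b x - b z) (x - z) ≤ K * ‖x - z‖ ^ 2)
    (hy : ∀ t, HasDerivAt y (-b (y t)) t) (hyΩ : y t₀ ∈ closure Ω) (hr : 0 < r)
    (hu_le : ∀ z ∈ closure Ω, ∀ s ∈ Icc t₁ t₀, u z s ≤ 1)
    (hini : ∀ z ∈ closure Ω, u z t₁ ≤ 0 ∨ r ≤ ‖z - y t₁‖)
    (hbd : ∀ z ∈ frontier Ω, ∀ s ∈ Icc t₁ t₀, u z s ≤ 0 ∨ r ≤ ‖z - y s‖) :
    u (y t₀) t₀ ≤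
      2 * ((r ^ 2)⁻¹ * Real.exp (2 * K * (t₀ - t₁))) * (ε * Λ) * (t₀ - t₁) := by
  set κ := 2 * ((r ^ 2)⁻¹ * Real.exp (2 * K * (t₀ - t₁))) * (ε * Λ)
  let w := movingParaboloid (r ^ 2)⁻¹ K κ t₁ y
  have hyc : Continuous y := continuous_iff_continuousAt.2 fun t => (hy t).continuousAt
  have hκ {s : ℝ} (hs : s ≤ t₀) :
      2 * ((r ^ 2)⁻¹ * Real.exp (2 * K * (s - t₁))) * (ε * Λ) ≤ κ := by
    simp only [κ]
    gcongr
  have hκ_nonneg : 0 ≤ κ := by positivity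
  have hw {z : Eu n} {s : ℝ} (hz : z ∈ closure Ω) (hs : s ∈ Icc t₁ t₀)
      (hor : u z s ≤ 0 ∨ r ≤ ‖z - y s‖) : u z s ≤ w z s := by
    have hst : 0 ≤ s - t₁ := sub_nonneg.2 hs.1
    rcases hor with hneg | hfar
    · exact hneg.trans (add_nonneg (by positivity) (mul_nonneg hκ_nonneg hst))
    · calc u z s ≤ 1 := hu_le z hz s hs
        _ = (r ^ 2)⁻¹ * 1 * r ^ 2 + 0 := by field_simp; simp
        _ ≤ w z s := by
          simp only [w, movingParaboloid]
          gcongr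
          · exact Real.one_le_exp (by positivity)
          · exact mul_nonneg hκ_nonneg hst
  have hcomp := hu.le_of_supersol (w := w) hε hΩo hΩb (fun x hx t ht => (hA x hx t ht).1)
    (by simp only [w, movingParaboloid]; fun_prop)
    (fun x _ t _ => regularAt_movingParaboloid (hy t).differentiableAt)
    (fun x hx t ht => rhsL_movingParaboloid_le_tD hε (by positivity) (hA x hx t ht).2 (hκ ht.2)
      (hb x (y t)) (hy t))
    (fun z hz => hw hz (left_mem_Icc.2 ht) (hini z hz))
    (fun z hz s hs => hw (frontier_subset_closure hz) hs (hbd z hz s hs))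
    (y t₀) hyΩ t₀ (right_mem_Icc.2 ht)
  simpa [w, movingParaboloid] using hcomp

end Barrier

section Flow

/-- `X` is the flow of the vector field `b`: `s ↦ X s x` is the integral curve of `b` starting at
`x`, defined for all positive and negative times. -/
structure IsFlow {E : Type*} [NormedAddCommGroup E] [NormedSpace ℝ E] (b : E → E)
    (X : ℝ → E → E) : Prop where
  map_zero : ∀ x, X 0 x = x
  hasDerivAt : ∀ x t, HasDerivAt (fun s => X s x) (b (X t x)) t

theorem GAS.isFlow {b : Eu n → Eu n} {X : ℝ → Eu n → Eu n} (hX : GAS b X) : IsFlow b X :=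
  ⟨hX.1, hX.2.1⟩

variable {E : Type*} [NormedAddCommGroup E] [NormedSpace ℝ E] {b : E → E} {X : ℝ → E → E}
  {K : NNReal} {S F N : Set E} {T s : ℝ}

theorem IsFlow.continuous_time (hX : IsFlow b X) (x : E) : Continuous fun s => X s x :=
  continuous_iff_continuousAt.2 fun t => (hX.hasDerivAt x t).continuousAt

theorem IsFlow.lipschitzWith (hX : IsFlow b X) (hb : LipschitzWith K b) (hs : s ∈ Icc 0 T) :
    LipschitzWith (Real.exp (K * T)).toNNReal (X s) := by
  refine LipschitzWith.of_dist_le' fun x z => ?_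
  calc dist (X s x) (X s z) ≤ dist x z * Real.exp (K * (s - 0)) :=
        dist_le_of_trajectories_ODE (v := fun _ => b) (fun _ => hb)
          (hX.continuous_time x).continuousOn (fun t _ => (hX.hasDerivAt x t).hasDerivWithinAt)
          (hX.continuous_time z).continuousOn (fun t _ => (hX.hasDerivAt z t).hasDerivWithinAt)
          (by simp only [hX.map_zero, le_refl]) s hs
    _ ≤ Real.exp (K * T) * dist x z := by
        rw [mul_comm, sub_zero]
        gcongr
        exact hs.2

theorem IsFlow.exists_uniform_hitting_time (hX : IsFlow b X) (hb : LipschitzWith K b)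
    (hS : IsCompact S) (hN : IsOpen N) (hhit : ∀ x ∈ S, ∃ τ ≥ 0, X τ x ∈ N) :
    ∃ T > 0, ∀ x ∈ S, ∃ τ ∈ Icc 0 T, X τ x ∈ N := by
  choose! τ hτ_nonneg hτ_mem using hhit
  have hnhds : ∀ x ∈ S, X (τ x) ⁻¹' N ∈ 𝓝 x := fun x hx =>
    (hN.preimage (hX.lipschitzWith hb ⟨hτ_nonneg x hx, le_rfl⟩).continuous).mem_nhds (hτ_mem x hx)
  obtain ⟨I, hIS, hcover⟩ := hS.elim_nhds_subcover _ hnhds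
  obtain ⟨T, hT⟩ := I.finite_toSet.image τ |>.bddAbove
  refine ⟨max T 1, by positivity, fun x hx => ?_⟩
  obtain ⟨z, hz, hxz⟩ := mem_iUnion₂.1 (hcover hx)
  exact ⟨τ z, ⟨hτ_nonneg z (hIS z hz), (hT (mem_image_of_mem τ hz)).trans (le_max_left T 1)⟩, hxz⟩

theorem IsFlow.continuousOn_uncurry (hX : IsFlow b X) (hb : LipschitzWith K b) (T : ℝ) :
    ContinuousOn (Function.uncurry X) (Icc 0 T ×ˢ univ) :=
  continuousOn_prod_of_continuousOn_lipschitzOnWith' (Function.uncurry X)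
    (Real.exp (K * T)).toNNReal (fun _ hs => (hX.lipschitzWith hb hs).lipschitzOnWith)
    fun x _ => (hX.continuous_time x).continuousOn

theorem IsFlow.exists_pos_forall_le_norm_sub (hX : IsFlow b X) (hb : LipschitzWith K b)
    (hS : IsCompact S) (hF : IsClosed F) (havoid : ∀ x ∈ S, ∀ s ∈ Icc 0 T, X s x ∉ F) :
    ∃ c > 0, ∀ x ∈ S, ∀ s ∈ Icc 0 T, ∀ z ∈ F, c ≤ ‖z - X s x‖ := by
  have hcompact : IsCompact (Function.uncurry X '' Icc 0 T ×ˢ S) :=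
    (isCompact_Icc.prod hS).image_of_continuousOn
      ((hX.continuousOn_uncurry hb T).mono (prod_mono_right (subset_univ S)))
  have hdisj : Disjoint (Function.uncurry X '' Icc 0 T ×ˢ S) F := by
    rw [Set.disjoint_left]
    rintro _ ⟨⟨s, x⟩, ⟨hs, hx⟩, rfl⟩
    exact havoid x hx s hs
  obtain ⟨c, hc, hlt⟩ := exists_pos_forall_lt_edist hcompact hF hdisj
  refine ⟨c, hc, fun x hx s hs z hz => ?_⟩
  have hXmem : X s x ∈ Function.uncurry X '' Icc 0 T ×ˢ S := ⟨(s, x), ⟨hs, hx⟩, rfl⟩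
  have hcz : c < nndist (X s x) z := by exact_mod_cast edist_nndist (X s x) z ▸ hlt _ hXmem z hz
  rw [← dist_eq_norm, dist_comm]
  exact NNReal.coe_le_coe.2 hcz.le

theorem IsFlow.exists_uniform_hitting_time_of_tendsto_zero (hX : IsFlow b X)
    (hb : LipschitzWith K b) (hS : IsCompact S) (hF : IsClosed F)
    (havoid : ∀ x ∈ S, ∀ s ≥ 0, X s x ∉ F)
    (hlim : ∀ x ∈ S, Tendsto (fun s => X s x) atTop (𝓝 0)) {δ : ℝ} (hδ : 0 < δ) :
    ∃ T > 0, ∃ r > 0, ∀ x ∈ S, ∃ τ ∈ Icc 0 T, (∀ z ∉ ball 0 δ, r ≤ ‖z - X τ x‖) ∧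
      ∀ s ∈ Icc 0 τ, ∀ z ∈ F, r ≤ ‖z - X s x‖ := by
  have hhit : ∀ x ∈ S, ∃ τ ≥ 0, X τ x ∈ ball 0 (δ / 2) := fun x hx =>
    ((eventually_ge_atTop 0).and
      ((hlim x hx).eventually_mem (ball_mem_nhds 0 (half_pos hδ)))).exists
  obtain ⟨T, hT, hreach⟩ := hX.exists_uniform_hitting_time hb hS isOpen_ball hhit
  obtain ⟨c, hc, hfar⟩ := hX.exists_pos_forall_le_norm_sub (T := T) hb hS hF
    fun x hx s hs => havoid x hx s hs.1
  refine ⟨T, hT, min c (δ / 2), by positivity, fun x hx => ?_⟩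
  obtain ⟨τ, hτ, hball⟩ := hreach x hx
  refine ⟨τ, hτ, fun z hz => (min_le_right _ _).trans ?_,
    fun s hs z hz => (min_le_left _ _).trans ?_⟩
  · rw [mem_ball_zero_iff] at hball hz
    linarith [norm_sub_norm_le z (X τ x)]
  · exact hfar x hx s ⟨hs.1, hs.2.trans hτ.2⟩ z hz

end Flow

section Invariance

variable {E : Type*} [NormedAddCommGroup E] [NormedSpace ℝ E] {b : E → E} {ρ : E → ℝ}
  {y : ℝ → E} {t₁ t : ℝ}

theorem eventually_sign_comp_of_fderiv_neg {y' : E} (hρ : DifferentiableAt ℝ ρ (y t))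
    (hy : HasDerivAt y y' t) (hzero : ρ (y t) = 0) (hneg : fderiv ℝ ρ (y t) y' < 0) :
    ∀ᶠ s in 𝓝 t, SignType.sign (ρ (y s)) = SignType.sign (t - s) := by
  have hderiv : HasDerivAt (fun s => ρ (y s)) (fderiv ℝ ρ (y t) y') t :=
    hρ.hasFDerivAt.comp_hasDerivAt t hy
  exact eventually_nhdsWithin_sign_eq_of_deriv_neg (hderiv.deriv.symm ▸ hneg) hzero

theorem mem_closure_sublevel_of_inward (hρ : Differentiable ℝ ρ)
    (hin : ∀ z ∈ frontier {z | ρ z < 0}, fderiv ℝ ρ z (b z) < 0)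
    (hy : ∀ s, HasDerivAt y (b (y s)) s) (hy₁ : y t₁ ∈ closure {z | ρ z < 0}) (ht : t₁ ≤ t) :
    y t ∈ closure {z | ρ z < 0} := by
  have hyc : Continuous y := continuous_iff_continuousAt.2 fun s => (hy s).continuousAt
  have hopen : IsOpen {z | ρ z < 0} := isOpen_lt hρ.continuous continuous_const
  suffices Icc t₁ t ⊆ {s | y s ∈ closure {z | ρ z < 0}} from this (right_mem_Icc.2 ht)
  refine IsClosed.Icc_subset_of_forall_mem_nhdsWithin
    ((isClosed_closure.preimage hyc).inter isClosed_Icc) hy₁ fun s ⟨hs, _⟩ => ?_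
  by_cases hmem : y s ∈ {z | ρ z < 0}
  · filter_upwards [nhdsWithin_le_nhds (hyc.continuousAt.preimage_mem_nhds (hopen.mem_nhds hmem))]
      with s' hs' using subset_closure hs'
  · have hfr : y s ∈ frontier {z | ρ z < 0} := hopen.frontier_eq ▸ ⟨hs, hmem⟩
    have hsign := eventually_sign_comp_of_fderiv_neg (hρ (y s)) (hy s)
      (frontier_lt_subset_eq hρ.continuous continuous_const hfr) (hin _ hfr)
    filter_upwards [nhdsWithin_le_nhds hsign, self_mem_nhdsWithin] with s' hs' hlt
    rw [sign_neg (sub_neg.2 hlt), sign_eq_neg_one_iff] at hs'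
    exact subset_closure hs'

theorem mem_sublevel_of_inward (hρ : Differentiable ℝ ρ)
    (hin : ∀ z ∈ frontier {z | ρ z < 0}, fderiv ℝ ρ z (b z) < 0)
    (hy : ∀ s, HasDerivAt y (b (y s)) s) (hy₁ : y t₁ ∈ closure {z | ρ z < 0}) (ht : t₁ < t) :
    y t ∈ {z | ρ z < 0} := by
  have hopen : IsOpen {z | ρ z < 0} := isOpen_lt hρ.continuous continuous_const
  have hclosure {s : ℝ} (hs : t₁ ≤ s) : y s ∈ closure {z | ρ z < 0} :=
    mem_closure_sublevel_of_inward hρ hin hy hy₁ hs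
  by_contra hmem
  have hfr : y t ∈ frontier {z | ρ z < 0} := hopen.frontier_eq ▸ ⟨hclosure ht.le, hmem⟩
  have hsign := eventually_sign_comp_of_fderiv_neg (hρ (y t)) (hy t)
    (frontier_lt_subset_eq hρ.continuous continuous_const hfr) (hin _ hfr)
  obtain ⟨s, hs, hs_mem⟩ :=
    ((hsign.filter_mono nhdsWithin_le_nhds).and (Ioo_mem_nhdsLT ht)).exists
  rw [sign_pos (sub_pos.2 hs_mem.2), sign_eq_one_iff] at hs
  exact hs.not_ge (closure_lt_subset_le hρ.continuous continuous_const (hclosure hs_mem.1.le))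

theorem IsBdC1With.flow_mem {Ω : Set (Eu n)} {ν b : Eu n → Eu n} {X : ℝ → Eu n → Eu n}
    (hΩ : IsBdC1With Ω ν) (hin : ∀ x ∈ frontier Ω, dotp (b x) (ν x) < 0) (hX : IsFlow b X) :
    ∀ x ∈ closure Ω, ∀ s > 0, X s x ∈ Ω := by
  obtain ⟨-, -, ρ, hρ, rfl, hν⟩ := hΩ
  refine fun x hx s hs => mem_sublevel_of_inward (hρ.differentiable one_ne_zero) (fun z hz => ?_)
    (hX.hasDerivAt x) ((hX.map_zero x).symm ▸ hx) hs
  obtain ⟨hgrad, hνz⟩ := hν z hz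
  have hprod : ‖gradient ρ z‖⁻¹ * fderiv ℝ ρ z (b z) < 0 := by
    simpa only [hνz, dotp_eq_inner, inner_smul_right, real_inner_comm (gradient ρ z),
      inner_gradient_left] using hin z hz
  exact neg_of_mul_neg_right hprod (by positivity)

end Invariance

section Spreading

theorem inner_sub_le_of_lipschitzWith {F : Type*} [NormedAddCommGroup F] [InnerProductSpace ℝ F]
    {b : F → F} {K : NNReal} (hb : LipschitzWith K b) (x z : F) :
    inner ℝ (b x - b z) (x - z) ≤ K * ‖x - z‖ ^ 2 :=
  calc inner ℝ (b x - b z) (x - z) ≤ ‖b x - b z‖ * ‖x - z‖ := real_inner_le_norm _ _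
    _ ≤ K * ‖x - z‖ * ‖x - z‖ := by gcongr; exact hb.norm_sub_le x z
    _ = K * ‖x - z‖ ^ 2 := by ring

variable {b : Eu n → Eu n} {X : ℝ → Eu n → Eu n} {K : NNReal} {Ω P : Set (Eu n)}
  {ε Λ δ r t τ : ℝ} {A : Eu n → ℝ → Matrix (Fin n) (Fin n) ℝ} {u : Eu n → ℝ → ℝ} {x : Eu n}

theorem IsSubsolOn.le_of_isFlow (hu : IsSubsolOn ε A b Ω (t - τ) t u) (hε : 0 ≤ ε)
    (hΩo : IsOpen Ω) (hΩb : Bornology.IsBounded Ω) (hΛ : 0 ≤ Λ) (hτ : 0 ≤ τ)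
    (hA : ∀ z ∈ Ω, ∀ s ∈ Ioc (t - τ) t, (A z s).PosSemidef ∧ (A z s).trace ≤ Λ)
    (hb : LipschitzWith K b) (hX : IsFlow b X) (hx : x ∈ closure Ω) (hr : 0 < r)
    (hu_le : ∀ z ∈ Ω, ∀ s ∈ Icc (t - τ) t, u z s ≤ 1)
    (hu_zero : ∀ z ∈ closure Ω ∩ ball 0 δ ∪ P, ∀ s ∈ Icc (t - τ) t, u z s ≤ 0)
    (hball : ∀ z ∉ ball 0 δ, r ≤ ‖z - X τ x‖)
    (hfar : ∀ s ∈ Icc 0 τ, ∀ z ∈ frontier Ω \ P, r ≤ ‖z - X s x‖) :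
    u x t ≤ 2 * ((r ^ 2)⁻¹ * Real.exp (2 * K * τ)) * (ε * Λ) * τ := by
  have hback (s : ℝ) : HasDerivAt (fun s => X (t - s) x) (-b (X (t - s) x)) s :=
    (hX.hasDerivAt x (t - s)).comp_const_sub t s
  have hu_le_closure : ∀ z ∈ closure Ω, ∀ s ∈ Icc (t - τ) t, u z s ≤ 1 := fun z hz s hs =>
    le_on_closure (fun z hz => hu_le z hz s hs)
      (hu.continuousOn.comp (by fun_prop : ContinuousOn (fun z => (z, s)) (closure Ω))
        fun z hz => ⟨hz, hs⟩) continuousOn_const hz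
  have hini : ∀ z ∈ closure Ω, u z (t - τ) ≤ 0 ∨ r ≤ ‖z - X (t - (t - τ)) x‖ := fun z hz => by
    by_cases hzδ : z ∈ ball 0 δ
    · exact .inl (hu_zero z (.inl ⟨hz, hzδ⟩) _ ⟨le_rfl, sub_le_self t hτ⟩)
    · exact .inr (by simpa using hball z hzδ)
  have hbd : ∀ z ∈ frontier Ω, ∀ s ∈ Icc (t - τ) t, u z s ≤ 0 ∨ r ≤ ‖z - X (t - s) x‖ :=
    fun z hz s hs => by
      by_cases hzP : z ∈ P
      · exact .inl (hu_zero z (.inr hzP) s hs)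
      · exact .inr (hfar (t - s) ⟨sub_nonneg.2 hs.2, sub_le_comm.1 hs.1⟩ z ⟨hz, hzP⟩)
  simpa [hX.map_zero] using hu.le_along_trajectory hε hΩo hΩb K.coe_nonneg hΛ (sub_le_self t hτ) hA
    (inner_sub_le_of_lipschitzWith hb) hback (by simpa [hX.map_zero] using hx) hr hu_le_closure
    hini hbd

theorem IsFlow.exists_hitting_time_avoiding_frontier (hX : IsFlow b X) (hΩo : IsOpen Ω)
    (hΩb : Bornology.IsBounded Ω) (hb : LipschitzWith K b)
    (hlim : ∀ x ∈ closure Ω, Tendsto (fun s => X s x) atTop (𝓝 0))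
    (hinv : ∀ x ∈ closure Ω, ∀ s > 0, X s x ∈ Ω)
    (hP : ∃ U : Set (Eu n), IsOpen U ∧ P = U ∩ frontier Ω) (hδ : 0 < δ) :
    ∃ T > 0, ∃ r > 0, ∀ x ∈ closure Ω, (∀ z ∈ frontier Ω \ P, δ ≤ dist x z) →
      ∃ τ ∈ Icc 0 T, (∀ z ∉ ball 0 δ, r ≤ ‖z - X τ x‖) ∧
        ∀ s ∈ Icc 0 τ, ∀ z ∈ frontier Ω \ P, r ≤ ‖z - X s x‖ := by
  have hF : IsClosed (frontier Ω \ P) := by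
    obtain ⟨U, hU, rfl⟩ := hP
    rw [inter_comm, sdiff_self_inter]
    exact isClosed_frontier.sdiff hU
  have hdist : IsClosed {x : Eu n | ∀ z ∈ frontier Ω \ P, δ ≤ dist x z} := by
    simp only [ofPred_forall]
    exact isClosed_biInter fun z _ => isClosed_le continuous_const (by fun_prop)
  have havoid : ∀ x ∈ closure Ω ∩ {x | ∀ z ∈ frontier Ω \ P, δ ≤ dist x z}, ∀ s ≥ 0,
      X s x ∉ frontier Ω \ P := by
    rintro x ⟨hx, hxd⟩ s hs hmem
    rcases hs.eq_or_lt with rfl | hs_pos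
    · rw [hX.map_zero] at hmem
      exact hδ.not_ge (dist_self x ▸ hxd x hmem)
    · exact (hΩo.frontier_eq ▸ hmem.1).2 (hinv x hx s hs_pos)
  obtain ⟨T, hT, r, hr, hhit⟩ := hX.exists_uniform_hitting_time_of_tendsto_zero hb
    (hΩb.isCompact_closure.inter_right hdist) hF havoid (fun x hx => hlim x hx.1) hδ
  exact ⟨T, hT, r, hr, fun x hx hxd => hhit x ⟨hx, hxd⟩⟩

end Spreading

/-- The distance condition on `x` is pointwise because `Metric.infDist x ∅ = 0`, which makes
`OmPid Ω P δ` empty for `P = frontier Ω`. -/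
theorem stmt6_general {Ω P : Set (Eu n)} {b : Eu n → Eu n} {X : ℝ → Eu n → Eu n} {K : NNReal}
    {Λ δ : ℝ} (hΛ : 0 ≤ Λ) (hΩo : IsOpen Ω) (hΩb : Bornology.IsBounded Ω)
    (hb : LipschitzWith K b) (hX : IsFlow b X)
    (hlim : ∀ x ∈ closure Ω, Tendsto (fun s => X s x) atTop (𝓝 0))
    (hinv : ∀ x ∈ closure Ω, ∀ s > 0, X s x ∈ Ω)
    (hP : ∃ U : Set (Eu n), IsOpen U ∧ P = U ∩ frontier Ω) (hδ : 0 < δ) :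
    ∃ Tδ > (0 : ℝ), ∃ ε₀ ∈ Ioo (0 : ℝ) 1, ∀ ε ∈ Ioo 0 ε₀,
      ∀ (A : Eu n → ℝ → Matrix (Fin n) (Fin n) ℝ) (T : ℝ≥0∞),
        (∀ x ∈ Ω, ∀ t : ℝ, 0 < t → ENNReal.ofReal t < T →
          (A x t).PosSemidef ∧ (A x t).trace ≤ Λ) →
        ∀ u : Eu n → ℝ → ℝ, ContinuousOn (fun p : Eu n × ℝ => u p.1 p.2) (cylC Ω T) →
        (∀ x ∈ Ω, ∀ t : ℝ, 0 < t → ENNReal.ofReal t < T → RegularAt u x t) →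
        SubsolL ε A b u Ω T →
        (∀ x ∈ Ω, ∀ t : ℝ, 0 ≤ t → ENNReal.ofReal t < T → u x t ≤ 1) →
        (∀ x ∈ closure Ω ∩ ball 0 δ ∪ P, ∀ t : ℝ, 0 ≤ t → ENNReal.ofReal t < T → u x t ≤ 0) →
        ∀ x ∈ closure Ω, (∀ z ∈ frontier Ω \ P, δ ≤ dist x z) →
        ∀ t : ℝ, Tδ ≤ t → ENNReal.ofReal t < T → u x t ≤ δ := by
  obtain ⟨Tδ, hTδ, r, hr, hhit⟩ :=
    hX.exists_hitting_time_avoiding_frontier hΩo hΩb hb hlim hinv hP hδ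
  set C := 2 * ((r ^ 2)⁻¹ * Real.exp (2 * K * Tδ)) * Λ * Tδ with hC
  have hC_pos : 0 < C + 1 := add_pos_of_nonneg_of_pos (by positivity) one_pos
  have hε₀ : min (1 / 2) (δ / (C + 1)) ∈ Ioo (0 : ℝ) 1 :=
    ⟨lt_min one_half_pos (div_pos hδ hC_pos), (min_le_left _ _).trans_lt one_half_lt_one⟩
  refine ⟨Tδ, hTδ, _, hε₀, fun ε hε A T hA u hcont hreg hsub hu_le hu_zero x hx hxd t ht htT => ?_⟩
  obtain ⟨τ, hτ, hball, hfar⟩ := hhit x hx hxd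
  have hstart : 0 ≤ t - τ := by linarith [hτ.2]
  have hT {s : ℝ} (hs : s ≤ t) : ENNReal.ofReal s < T :=
    (ENNReal.ofReal_le_ofReal hs).trans_lt htT
  have hε_nonneg : 0 ≤ ε := hε.1.le
  have hε_le : ε * (C + 1) ≤ δ :=
    (le_div_iff₀ hC_pos).1 (hε.2.le.trans (min_le_right _ _))
  calc u x t ≤ 2 * ((r ^ 2)⁻¹ * Real.exp (2 * K * τ)) * (ε * Λ) * τ :=
        (hsub.isSubsolOn hcont hreg hstart htT).le_of_isFlow hε_nonneg hΩo hΩb hΛ hτ.1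
          (fun z hz s hs => hA z hz s (hstart.trans_lt hs.1) (hT hs.2)) hb hX hx hr
          (fun z hz s hs => hu_le z hz s (hstart.trans hs.1) (hT hs.2))
          (fun z hz s hs => hu_zero z hz s (hstart.trans hs.1) (hT hs.2)) hball hfar
    _ ≤ 2 * ((r ^ 2)⁻¹ * Real.exp (2 * K * Tδ)) * (ε * Λ) * Tδ := by
        obtain ⟨hτ_nonneg, hτ_le⟩ := hτ
        gcongr
    _ = ε * C := by rw [hC]; ring
    _ ≤ δ := by linarith

/-- Proposition 2.4 (spreading of smallness). -/
theorem stmt6 {n : ℕ} (θ₀ : ℝ) (hθ : θ₀ ∈ Set.Ioc (0:ℝ) 1)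
    (Ω : Set (Eu n)) (ν : Eu n → Eu n) (b : Eu n → Eu n) (b₀ r₀ : ℝ)
    (hdom : IsBdC1With Ω ν) (h0 : (0 : Eu n) ∈ Ω)
    (hbl : ∃ K : NNReal, LipschitzWith K b) (hb0 : b 0 = 0)
    (hgas : ∃ X : ℝ → Eu n → Eu n, GAS b X)
    (hin : ∀ x ∈ frontier Ω, dotp (b x) (ν x) < 0)
    (hb₀ : 0 < b₀) (hr₀ : 0 < r₀) (hsub : closedBall (0 : Eu n) r₀ ⊆ Ω)
    (hco : ∀ x ∈ ball (0 : Eu n) r₀, dotp (b x) x ≤ -b₀ * ‖x‖ ^ 2)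
    (Pset : Set (Eu n)) (hP : ∃ U : Set (Eu n), IsOpen U ∧ Pset = U ∩ frontier Ω)
    (δ : ℝ) (hδ : δ ∈ Set.Ioo 0 r₀) :
    ∃ Tδ > (0:ℝ), ∃ ε₀ ∈ Set.Ioo (0:ℝ) 1,
      ∀ ε ∈ Set.Ioo (0:ℝ) ε₀,
      ∀ (A : Eu n → ℝ → Matrix (Fin n) (Fin n) ℝ) (T : ℝ≥0∞),
        ENNReal.ofReal Tδ < T → MatC θ₀ A Ω T →
        ∀ u : Eu n → ℝ → ℝ, Classical21 u Ω T → SolveL ε A b u Ω T →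
        (∀ x ∈ Ω, ∀ t : ℝ, 0 ≤ t → ENNReal.ofReal t < T → u x t ≤ 1) →
        (∀ x ∈ ball (0 : Eu n) δ ∪ Pset, ∀ t : ℝ, 0 ≤ t → ENNReal.ofReal t < T →
          u x t ≤ 0) →
        ∀ x ∈ OmPid Ω Pset δ, ∀ t : ℝ, Tδ ≤ t → ENNReal.ofReal t < T → u x t ≤ δ := by
  obtain ⟨K, hK⟩ := hbl
  obtain ⟨X, hX⟩ := hgas
  have hΛ : 0 ≤ n * θ₀⁻¹ := mul_nonneg n.cast_nonneg (inv_nonneg.2 hθ.1.le)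
  obtain ⟨Tδ, hTδ, ε₀, hε₀, hspread⟩ := stmt6_general hΛ hdom.1 hdom.2.1 hK hX.isFlow
    (fun x _ => hX.2.2.1 x) (hdom.flow_mem hin hX.isFlow) hP hδ.1
  refine ⟨Tδ, hTδ, ε₀, hε₀, fun ε hε A T _ hA u hu hsol hu_le hu_zero x hx t => ?_⟩
  refine hspread ε hε A T (fun z hz s hs hsT => ?_) u hu.1 hu.2.1
    (fun z hz s hs hsT => (hsol z hz s hs hsT).le) hu_le
    (fun z hz => hu_zero z (hz.imp_left And.right)) x hx.1
    (fun z hz => hx.2.le.trans (infDist_le_dist_of_mem hz)) t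
  have hmem : memS θ₀ (A z s) := hA.2 (z, s) ⟨subset_closure hz, hs.le, hsT.le⟩
  exact ⟨hmem.posSemidef hθ.1.le, hmem.trace_le⟩
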